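/- arXiv:2407.15434 — 2 statements merged into one kernel-verified Lean document; each statement's English description precedes it below -/
import Mathlib

section
/- Let T > 0 and let σ : [0, T] × ℝ → ℝ be measurable with |σ(s, y)| ≤ C_σ for all s, y. Then for every β ∈ (1/2, 1) and every λ̃ ∈ (0, 1/4) there exists a constant C, depending only on C_σ, T, β, λ̃, such that for all t ∈ [0, T], x, y ∈ ℝ, and h ∈ [0, 1]: |∫₀ᵗ (p(t − s, x − y − h) − p(t − s, x − y)) σ(s, y + h) ds| ≤ C h^β · exp(−λ̃ (x − y)²/T). -/
/-!
Put `u = t - s` and `a = x - y`. The Gaussian weight `exp (-κ z² / u)` with `lam < κ < 1/4` dominates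
both `√u · p(u, z)` and, up to a constant, `u · ∂ₓp(u, z)` (the factor `|z| / √u` is absorbed by the
spare exponent `1/4 - κ`). For `u ≤ T` and `z` within distance `1` of `a`, completing the square gives
`exp (-κ z² / u) ≤ exp (K / T) * exp (-lam a² / T)`. Hence, by the triangle inequality and by the
mean value theorem respectively, the increment of `p(u, ·)` between `a` and `a - h` is at most
a constant times `u^(-1/2) * min 1 (h / √u) * exp (-lam a² / T)`. Since `min 1 r ≤ r ^ β`, this is
at most a constant times `h ^ β * u ^ (-(1 + β) / 2) * exp (-lam a² / T)`, which is integrable in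
`u` near `0` because `β < 1`.
-/

open MeasureTheory Real

/-- The one-dimensional heat kernel `p(t,x) = (1/(2√(πt))) exp(-x²/(4t))`. -/
noncomputable def heatKernel (t x : ℝ) : ℝ :=
  (1 / (2 * Real.sqrt (Real.pi * t))) * Real.exp (-(x ^ 2) / (4 * t))

lemma heatKernel_nonneg (u z : ℝ) : 0 ≤ heatKernel u z := by
  unfold heatKernel; positivity

lemma heatKernel_le {u : ℝ} (hu : 0 < u) (z : ℝ) :
    heatKernel u z ≤ 1 / √u * exp (-(z ^ 2) / (4 * u)) := by
  unfold heatKernel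
  have hs : 0 < √u := Real.sqrt_pos.2 hu
  have h1 : √u ≤ √(π * u) := by
    apply Real.sqrt_le_sqrt
    nlinarith [Real.pi_gt_three]
  gcongr
  linarith

lemma heatKernel_le_weight {u κ : ℝ} (hu : 0 < u) (hκ : κ ≤ 1 / 4) (z : ℝ) :
    heatKernel u z ≤ 1 / √u * exp (-κ * z ^ 2 / u) := by
  refine (heatKernel_le hu z).trans ?_
  refine mul_le_mul_of_nonneg_left (Real.exp_le_exp.2 ?_) (by positivity)
  rw [div_le_div_iff₀ (by positivity) hu]
  have : 0 ≤ (1 / 4 - κ) * (z ^ 2 * u) := by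
    have : 0 ≤ 1 / 4 - κ := by linarith
    positivity
  nlinarith

lemma heatKernel_hasDerivAt {u : ℝ} (hu : 0 < u) (z : ℝ) :
    HasDerivAt (heatKernel u) (-(z / (2 * u)) * heatKernel u z) z := by
  unfold heatKernel
  have h1 : HasDerivAt (fun z : ℝ => -(z ^ 2) / (4 * u)) (-(2 * z) / (4 * u)) z := by
    simpa using ((hasDerivAt_pow 2 z).neg.div_const (4 * u))
  have h2 := (h1.exp.const_mul (1 / (2 * √(π * u))))
  refine h2.congr_deriv ?_
  field_simp
  ring

/-- The factor `|z| / √u` of the derivative is absorbed by the spare exponent `1/4 - κ`. -/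
lemma heatKernel_deriv_le {u κ : ℝ} (hu : 0 < u) (hκ0 : 0 < κ) (hκ : κ < 1 / 4) (z : ℝ) :
    |-(z / (2 * u)) * heatKernel u z| ≤ 1 / (1 / 4 - κ) / u * exp (-κ * z ^ 2 / u) := by
  have hδ : 0 < 1 / 4 - κ := by linarith
  generalize hδd : 1 / 4 - κ = δ at *
  have hw : 0 < √u := Real.sqrt_pos.2 hu
  have hww : √u ^ 2 = u := Real.sq_sqrt hu.le
  have hr : |z| / √u ≤ 1 / δ * exp (δ * z ^ 2 / u) := by
    have h1 : δ * (|z| / √u) ^ 2 = δ * z ^ 2 / u := by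
      rw [div_pow, sq_abs, hww]; ring
    rw [← h1]
    generalize |z| / √u = r
    rw [div_mul_eq_mul_div, le_div_iff₀ hδ, one_mul]
    have h2 := Real.add_one_le_exp (δ * r ^ 2)
    nlinarith [sq_nonneg (r - 1), mul_nonneg hδ.le (sq_nonneg (r - 1 / 2))]
  rw [abs_mul, abs_neg, abs_div, abs_of_pos (by positivity : 0 < 2 * u),
    abs_of_nonneg (heatKernel_nonneg u z)]
  calc |z| / (2 * u) * heatKernel u z
      ≤ |z| / (2 * u) * (1 / √u * exp (-(z ^ 2) / (4 * u))) := by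
        gcongr; exact heatKernel_le hu z
    _ = 1 / 2 / u * ((|z| / √u) * exp (-(z ^ 2) / (4 * u))) := by
        field_simp
    _ ≤ 1 / u * ((1 / δ * exp (δ * z ^ 2 / u)) * exp (-(z ^ 2) / (4 * u))) := by
        gcongr; norm_num
    _ = 1 / δ / u * exp (-κ * z ^ 2 / u) := by
        have : exp (-κ * z ^ 2 / u) = exp (δ * z ^ 2 / u) * exp (-(z ^ 2) / (4 * u)) := by
          rw [← Real.exp_add, ← hδd]
          congr 1
          field_simp
          ring
        rw [this]
        field_simp

/-- Recentring of the Gaussian weight, by completing the square: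
`κ (a - θ)² + K θ² ≥ lam a²` with `K = κ lam / (κ - lam)`. -/
lemma weight_shift {u T κ lam a θ : ℝ} (hu : 0 < u) (huT : u ≤ T) (hlam : 0 < lam)
    (hκ : lam < κ) (h0 : 0 ≤ θ) (h1 : θ ≤ 1) :
    exp (-κ * (a - θ) ^ 2 / u) ≤
      exp (κ * lam / (κ - lam) / T) * exp (-lam * a ^ 2 / T) := by
  have hT : 0 < T := hu.trans_le huT
  have hd : 0 < κ - lam := by linarith
  have hκ0 : 0 < κ := by linarith
  rw [← Real.exp_add, Real.exp_le_exp]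
  have e1 : -κ * (a - θ) ^ 2 / u ≤ -κ * (a - θ) ^ 2 / T := by
    have : κ * (a - θ) ^ 2 / T ≤ κ * (a - θ) ^ 2 / u := by gcongr
    simp only [neg_mul, neg_div]
    linarith
  refine e1.trans ?_
  rw [← add_div]
  gcongr
  set K := κ * lam / (κ - lam) with hK
  have hKd : K * (κ - lam) = κ * lam := by rw [hK]; field_simp
  have hK0 : 0 ≤ K := by positivity
  have hsq : 0 ≤ (κ - lam) * (κ * (a - θ) ^ 2 - lam * a ^ 2 + K * θ ^ 2) := by
    have : (κ - lam) * (κ * (a - θ) ^ 2 - lam * a ^ 2 + K * θ ^ 2)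
        = ((κ - lam) * a - κ * θ) ^ 2 := by
      linear_combination θ ^ 2 * hKd
    rw [this]; positivity
  have h3 := nonneg_of_mul_nonneg_right hsq hd
  have h4 : θ ^ 2 ≤ 1 := by nlinarith
  nlinarith [mul_le_mul_of_nonneg_left h4 hK0]

/-- Hölder bound for the spatial increment of the heat kernel; the exponent `β` interpolates between
the triangle inequality (`β = 0`) and the mean value theorem (`β = 1`). -/
lemma heatKernel_increment_le {u T κ lam β a h : ℝ} (hu : 0 < u) (huT : u ≤ T) (hlam : 0 < lam)
    (hκ : lam < κ) (hκ4 : κ < 1 / 4) (hβ0 : 0 < β) (hβ1 : β < 1) (h0 : 0 ≤ h) (h1 : h ≤ 1) :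
    |heatKernel u (a - h) - heatKernel u a| ≤
      2 / (1 / 4 - κ) * exp (κ * lam / (κ - lam) / T) * exp (-lam * a ^ 2 / T) * h ^ β
        * u ^ (-(1 + β) / 2) := by
  have hδ : 0 < 1 / 4 - κ := by linarith
  have hκ0 : 0 < κ := by linarith
  have hw : 0 < √u := Real.sqrt_pos.2 hu
  have hww : √u * √u = u := Real.mul_self_sqrt hu.le
  set E := exp (κ * lam / (κ - lam) / T) * exp (-lam * a ^ 2 / T) with hE
  have hE0 : 0 < E := by positivity
  have hδ1 : 1 ≤ 1 / (1 / 4 - κ) := by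
    rw [le_div_iff₀ hδ]; linarith
  have b1 : |heatKernel u (a - h) - heatKernel u a| ≤ 2 / (1 / 4 - κ) * E * (1 / √u) := by
    have p1 : heatKernel u (a - h) ≤ 1 / √u * E :=
      (heatKernel_le_weight hu hκ4.le _).trans (by
        gcongr; exact weight_shift hu huT hlam hκ h0 h1)
    have p2 : heatKernel u a ≤ 1 / √u * E := by
      have := weight_shift (a := a) hu huT hlam hκ le_rfl zero_le_one
      rw [sub_zero] at this
      exact (heatKernel_le_weight hu hκ4.le _).trans (by gcongr)
    have q1 := heatKernel_nonneg u (a - h)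
    have q2 := heatKernel_nonneg u a
    have hX : 0 ≤ 1 / √u * E := by positivity
    have : 1 / √u * E ≤ 2 / (1 / 4 - κ) * E * (1 / √u) := by
      have : 2 / (1 / 4 - κ) * E * (1 / √u) = 2 * (1 / (1 / 4 - κ)) * (1 / √u * E) := by ring
      rw [this]
      nlinarith
    rw [abs_le]
    constructor <;> linarith
  have b2 : |heatKernel u (a - h) - heatKernel u a| ≤
      2 / (1 / 4 - κ) * E * (1 / √u) * (h / √u) := by
    have mv := Convex.norm_image_sub_le_of_norm_hasDerivWithin_le
      (f := heatKernel u) (f' := fun z => -(z / (2 * u)) * heatKernel u z)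
      (s := Set.Icc (a - h) a) (x := a) (y := a - h) (C := 1 / (1 / 4 - κ) / u * E)
      (fun z _ => (heatKernel_hasDerivAt hu z).hasDerivWithinAt)
      (fun z hz => by
        rw [Real.norm_eq_abs]
        refine (heatKernel_deriv_le hu hκ0 hκ4 z).trans ?_
        have := weight_shift (a := a) (θ := a - z) hu huT hlam hκ (by linarith [hz.2])
          (by linarith [hz.1])
        rw [sub_sub_cancel] at this
        gcongr)
      (convex_Icc _ _) (by constructor <;> linarith) (by constructor <;> linarith)
    rw [Real.norm_eq_abs, Real.norm_eq_abs, sub_sub_cancel_left, abs_neg, abs_of_nonneg h0] at mv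
    refine mv.trans ?_
    have : 2 / (1 / 4 - κ) * E * (1 / √u) * (h / √u) = 2 * (1 / (1 / 4 - κ) / u * E * h) := by
      nth_rewrite 3 [← hww]
      ring
    rw [this]
    have : 0 ≤ 1 / (1 / 4 - κ) / u * E * h := by positivity
    linarith
  have hr0 : 0 ≤ h / √u := by positivity
  have b3 : |heatKernel u (a - h) - heatKernel u a| ≤
      2 / (1 / 4 - κ) * E * (1 / √u) * (h / √u) ^ β := by
    have hA : 0 ≤ 2 / (1 / 4 - κ) * E * (1 / √u) := by positivity
    rcases le_total (h / √u) 1 with hr | hr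
    · refine b2.trans (mul_le_mul_of_nonneg_left ?_ hA)
      exact Real.self_le_rpow_of_le_one hr0 hr hβ1.le
    · exact b1.trans (le_mul_of_one_le_right hA (Real.one_le_rpow hr hβ0.le))
  refine b3.trans (le_of_eq ?_)
  have hpow : 1 / √u * (1 / √u) ^ β = u ^ (-(1 + β) / 2) := by
    rw [Real.sqrt_eq_rpow, one_div, ← Real.rpow_neg hu.le, ← Real.rpow_mul hu.le,
      ← Real.rpow_add hu]
    congr 1; ring
  rw [← hpow, div_eq_mul_one_div h, Real.mul_rpow h0 (by positivity), hE]
  ring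

lemma integrable_kernel_weight {t β : ℝ} (ht : 0 ≤ t) (hβ1 : β < 1) :
    IntegrableOn (fun s => (t - s) ^ (-(1 + β) / 2)) (Set.Ioo 0 t) := by
  have h := (intervalIntegral.intervalIntegrable_rpow' (a := 0) (b := t)
    (r := -(1 + β) / 2) (by linarith)).comp_sub_left t
  simp only [sub_zero, sub_self] at h
  exact ((intervalIntegrable_iff_integrableOn_Ioc_of_le ht).1 h.symm).mono_set
    Set.Ioo_subset_Ioc_self

lemma integral_kernel_weight {t β : ℝ} (ht : 0 ≤ t) (hβ1 : β < 1) :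
    ∫ s in Set.Ioo 0 t, (t - s) ^ (-(1 + β) / 2) = t ^ ((1 - β) / 2) / ((1 - β) / 2) := by
  rw [← integral_Ioc_eq_integral_Ioo, ← intervalIntegral.integral_of_le ht,
    intervalIntegral.integral_comp_sub_left (fun u => u ^ (-(1 + β) / 2)) t, sub_self, sub_zero,
    integral_rpow (Or.inl (by linarith))]
  have e : -(1 + β) / 2 + 1 = (1 - β) / 2 := by ring
  rw [e, Real.zero_rpow (by linarith), sub_zero]

/-- If `σ : [0,T] × ℝ → ℝ` is measurable and bounded by `C_σ`, then for every
`β ∈ (1/2, 1)` and every `λ̃ ∈ (0, 1/4)` there is a constant `C > 0`, depending only on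
`C_σ, T, β, λ̃`, such that for all `t ∈ [0,T]`, `x, y ∈ ℝ` and `h ∈ [0,1]`,
`|∫₀ᵗ (p(t-s, x-y-h) - p(t-s, x-y)) σ(s, y+h) ds| ≤ C h^β exp(-λ̃ (x-y)²/T)`. -/
theorem heat_kernel_increment_convolution_bound (T Cσ β lam : ℝ) (hT : 0 < T)
    (hβ₁ : 1 / 2 < β) (hβ₂ : β < 1) (hlam₁ : 0 < lam) (hlam₂ : lam < 1 / 4) :
    ∃ C : ℝ, 0 < C ∧
      ∀ σ : ℝ → ℝ → ℝ,
        Measurable (Function.uncurry σ) →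
        (∀ s ∈ Set.Icc (0 : ℝ) T, ∀ y : ℝ, |σ s y| ≤ Cσ) →
        ∀ t ∈ Set.Icc (0 : ℝ) T, ∀ x y : ℝ, ∀ h ∈ Set.Icc (0 : ℝ) 1,
          |∫ s in Set.Ioo 0 t,
              (heatKernel (t - s) (x - y - h) - heatKernel (t - s) (x - y)) * σ s (y + h)| ≤
            C * h ^ β * Real.exp (-lam * (x - y) ^ 2 / T) := by
  obtain ⟨κ, hκ, hκ4⟩ := exists_between hlam₂
  have hδ : 0 < 1 / 4 - κ := by linarith
  have hb : 0 < (1 - β) / 2 := by linarith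
  set A := 2 / (1 / 4 - κ) * exp (κ * lam / (κ - lam) / T) with hA
  have hA0 : 0 < A := by positivity
  -- `|Cσ| + 1` rather than `Cσ` keeps the constant positive for every real `Cσ`.
  refine ⟨A * (|Cσ| + 1) * (T ^ ((1 - β) / 2) / ((1 - β) / 2)), by positivity, ?_⟩
  intro σ _ hσ t ht x y h hh
  set B := A * exp (-lam * (x - y) ^ 2 / T) * h ^ β * (|Cσ| + 1) with hB
  have hB0 : 0 ≤ B := by have := hh.1; positivity
  have key : ‖∫ s in Set.Ioo 0 t,
      (heatKernel (t - s) (x - y - h) - heatKernel (t - s) (x - y)) * σ s (y + h)‖ ≤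
      ∫ s in Set.Ioo 0 t, B * (t - s) ^ (-(1 + β) / 2) := by
    apply norm_integral_le_of_norm_le ((integrable_kernel_weight ht.1 hβ₂).const_mul B)
    filter_upwards [ae_restrict_mem measurableSet_Ioo] with s hs
    have hu : 0 < t - s := by linarith [hs.2]
    have i1 := heatKernel_increment_le (a := x - y) hu (by linarith [hs.1, ht.2] : t - s ≤ T)
      hlam₁ hκ hκ4 (by linarith) hβ₂ hh.1 hh.2
    have i2 : |σ s (y + h)| ≤ |Cσ| + 1 :=
      (hσ s ⟨hs.1.le, by linarith [hs.2, ht.2]⟩ _).trans (by linarith [le_abs_self Cσ])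
    rw [norm_mul, Real.norm_eq_abs, Real.norm_eq_abs]
    refine (mul_le_mul i1 i2 (abs_nonneg _) ((abs_nonneg _).trans i1)).trans (le_of_eq ?_)
    rw [hB, hA]; ring
  rw [Real.norm_eq_abs, integral_const_mul, integral_kernel_weight ht.1 hβ₂] at key
  refine key.trans ?_
  have hmono : t ^ ((1 - β) / 2) / ((1 - β) / 2) ≤ T ^ ((1 - β) / 2) / ((1 - β) / 2) := by
    gcongr
    · exact ht.1
    · exact ht.2
  refine (mul_le_mul_of_nonneg_left hmono hB0).trans (le_of_eq ?_)
  rw [hB]; ring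
end

section
/- Let T > 0 and let σ : [0, T] × ℝ → ℝ be measurable with |σ(s, y)| ≤ C_σ and |σ(s, y₁) − σ(s, y₂)| ≤ L_σ |y₁ − y₂|^{β(σ)} for all s, y, y₁, y₂, where 1/2 < β(σ) < 1 (Assumption A4). Define q(t, x, y) = ∫₀ᵗ p(t − s, x − y) σ(s, y) ds. Then for every λ̃ ∈ (0, 1/4) there exists a constant C such that for all t ∈ [0, T], x ∈ ℝ, every j ∈ ℤ, all h ∈ [0, 1], and all y with y, y + h ∈ [j, j + 1]: |q(t, x, y + h) − q(t, x, y)| ≤ C h^{β(σ)} · exp(λ̃ (1 − (|x − j| − 1)²)/T). -/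
/-!
Write `r = t - s` for the elapsed time and `E` for the exponential weight on the right-hand side.
The integrand of `q(t,x,y+h) - q(t,x,y)` is
`p(r,x-y-h) (σ(s,y+h) - σ(s,y)) + (p(r,x-y-h) - p(r,x-y)) σ(s,y)`.

Since `r ≤ T` and `lam < 1/4`, every Gaussian `exp(-ξ²/(4r))` with `x - ξ ∈ [j, j+1]` is at most
`exp(-lam ξ²/T) ≤ E` (`exp_neg_sq_div_le`, `exp_decay_le_weight`). With the Hölder bound on `σ`,
the first term is therefore at most `Lσ r^{-1/2} h^β E`.

For the second term the mean value theorem bounds the increment of the Gaussian by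
`K (h/√r) E`, where the slack `1/4 - lam` in the exponent absorbs the factor `ξ/√r`
(`abs_exp_sub_exp_le`). Interpolating with the trivial bound `E` replaces `h/√r` by `(h/√r)^β`
(`abs_exp_sub_exp_le_rpow`), so the second term is at most `Cσ K r^{-(1+β)/2} h^β E`.

Both powers of `r` are integrable at `0` because `β < 1`, and the constant is their integral over
`(0, T)` plus one, the latter only to make it positive.
-/


open MeasureTheory Real

/-- The function `q(t,x,y) = ∫₀ᵗ p(t-s, x-y) σ(s,y) ds`. -/
noncomputable def qFun (σ : ℝ → ℝ → ℝ) (t x y : ℝ) : ℝ :=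
  ∫ s in Set.Ioo 0 t, heatKernel (t - s) (x - y) * σ s y

/-! ### Increments of the Gaussian -/

/-- Gaussians decay faster than the identity grows, with the explicit constant `1 + 1/δ`. -/
lemma abs_mul_exp_neg_le (δ v : ℝ) (hδ : 0 < δ) :
    |v| * Real.exp (-(δ * v ^ 2)) ≤ 1 + 1 / δ := by
  rw [Real.exp_neg, ← div_eq_mul_inv, div_le_iff₀ (Real.exp_pos _)]
  have h1 : δ * v ^ 2 + 1 ≤ Real.exp (δ * v ^ 2) := Real.add_one_le_exp _
  have h2 : |v| ≤ 1 + v ^ 2 := by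
    rw [← sq_abs v]; nlinarith [sq_nonneg (|v| - 1), abs_nonneg v]
  have h3 : (1 + 1 / δ) * (δ * v ^ 2 + 1) = 1 + v ^ 2 + (δ * v ^ 2 + 1 / δ) := by
    field_simp; ring
  have h4 : 0 ≤ δ * v ^ 2 + 1 / δ := by positivity
  have h5 : (1 + 1 / δ) * (δ * v ^ 2 + 1) ≤ (1 + 1 / δ) * Real.exp (δ * v ^ 2) := by
    gcongr
  linarith

lemma exp_neg_sq_div_le {T lam r u : ℝ} (hlam₂ : lam < 1 / 4)
    (hr : 0 < r) (hrT : r ≤ T) :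
    Real.exp (-(u ^ 2) / (4 * r)) ≤ Real.exp (-(lam * u ^ 2 / T)) := by
  apply Real.exp_le_exp.mpr
  rw [neg_div]
  apply neg_le_neg
  rw [div_le_div_iff₀ (by linarith) (by positivity)]
  have h1 : lam * 4 * r ≤ 1 * T := by nlinarith
  nlinarith [mul_le_mul_of_nonneg_left h1 (sq_nonneg u)]

/-- Spatial Lipschitz bound for the unnormalised heat kernel. A part `lam < 1/4` of the Gaussian
exponent is kept as decay, the remainder `1/4 - lam` absorbs the factor `ξ / √r` produced by
differentiation. -/
lemma abs_exp_sub_exp_le {T lam r a b E : ℝ} (hlam₁ : 0 < lam) (hlam₂ : lam < 1 / 4)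
    (hr : 0 < r) (hrT : r ≤ T) (hab : a ≤ b)
    (hE : ∀ ξ ∈ Set.Icc a b, Real.exp (-(lam * ξ ^ 2 / T)) ≤ E) :
    |Real.exp (-(a ^ 2) / (4 * r)) - Real.exp (-(b ^ 2) / (4 * r))| ≤
      (1 + 1 / (1 / 4 - lam)) * ((b - a) / Real.sqrt r) * E := by
  have hδ : 0 < 1 / 4 - lam := by linarith
  have hs : 0 < Real.sqrt r := Real.sqrt_pos.mpr hr
  have hss : Real.sqrt r ^ 2 = r := Real.sq_sqrt hr.le
  set K := 1 + 1 / (1 / 4 - lam) with hK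
  have hKpos : 0 < K := by positivity
  have hd : ∀ ξ ∈ Set.Icc a b, HasDerivWithinAt (fun ξ : ℝ => Real.exp (-(ξ ^ 2) / (4 * r)))
      (Real.exp (-(ξ ^ 2) / (4 * r)) * (-(2 * ξ) / (4 * r))) (Set.Icc a b) ξ := by
    intro ξ _
    have h := (((hasDerivAt_pow 2 ξ).neg).div_const (4 * r)).exp
    simpa using h.hasDerivWithinAt
  have hbound : ∀ ξ ∈ Set.Icc a b,
      ‖Real.exp (-(ξ ^ 2) / (4 * r)) * (-(2 * ξ) / (4 * r))‖ ≤ K / Real.sqrt r * E := by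
    intro ξ hξ
    have hEξ := hE ξ hξ
    set v := ξ / Real.sqrt r with hv
    have hξv : ξ = v * Real.sqrt r := by rw [hv]; field_simp
    have hsplit : Real.exp (-(ξ ^ 2) / (4 * r)) =
        Real.exp (-((1 / 4 - lam) * v ^ 2)) * Real.exp (-(lam * ξ ^ 2 / r)) := by
      rw [← Real.exp_add]
      congr 1
      rw [hξv, mul_pow, hss]
      field_simp
      ring
    have hdecay : Real.exp (-(lam * ξ ^ 2 / r)) ≤ E := by
      refine le_trans (Real.exp_le_exp.mpr ?_) hEξ
      apply neg_le_neg
      gcongr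
    have hv1 := abs_mul_exp_neg_le (1 / 4 - lam) v hδ
    have hfac : |(-(2 * ξ) / (4 * r))| = |v| / Real.sqrt r / 2 := by
      rw [abs_div, abs_neg, abs_mul, abs_of_pos (show (0 : ℝ) < 4 * r by positivity), hv, abs_div,
        abs_of_pos hs, abs_of_pos (show (0 : ℝ) < 2 by norm_num), div_div |ξ|, ← pow_two, hss]
      field_simp
      ring
    rw [norm_mul, Real.norm_eq_abs, Real.norm_eq_abs, Real.abs_exp, hfac, hsplit]
    calc Real.exp (-((1 / 4 - lam) * v ^ 2)) * Real.exp (-(lam * ξ ^ 2 / r)) *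
          (|v| / Real.sqrt r / 2)
        = (|v| * Real.exp (-((1 / 4 - lam) * v ^ 2))) / Real.sqrt r / 2 *
            Real.exp (-(lam * ξ ^ 2 / r)) := by ring
      _ ≤ K / Real.sqrt r / 2 * E := by gcongr
      _ ≤ K / Real.sqrt r * E := by
          have : 0 ≤ E := (Real.exp_pos _).le.trans hdecay
          exact mul_le_mul_of_nonneg_right (half_le_self (div_nonneg hKpos.le hs.le)) this
  have h := (convex_Icc a b).norm_image_sub_le_of_norm_hasDerivWithin_le hd hbound
    (Set.right_mem_Icc.mpr hab) (Set.left_mem_Icc.mpr hab)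
  rw [Real.norm_eq_abs, Real.norm_eq_abs, abs_sub_comm a b,
    abs_of_nonneg (sub_nonneg.mpr hab)] at h
  calc _ ≤ _ := h
    _ = _ := by ring

/-- Interpolation of the Lipschitz bound with the trivial bound `E`, using
`min 1 w ≤ w ^ β` for `w = (b - a) / √r`. -/
lemma abs_exp_sub_exp_le_rpow {T lam r a b E β : ℝ} (hlam₁ : 0 < lam) (hlam₂ : lam < 1 / 4)
    (hr : 0 < r) (hrT : r ≤ T) (hab : a ≤ b) (hβ₁ : 0 < β) (hβ₂ : β < 1)
    (hE : ∀ ξ ∈ Set.Icc a b, Real.exp (-(lam * ξ ^ 2 / T)) ≤ E) :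
    |Real.exp (-(a ^ 2) / (4 * r)) - Real.exp (-(b ^ 2) / (4 * r))| ≤
      (1 + 1 / (1 / 4 - lam)) * ((b - a) / Real.sqrt r) ^ β * E := by
  have hδ : 0 < 1 / 4 - lam := by linarith
  have hs : 0 < Real.sqrt r := Real.sqrt_pos.mpr hr
  have hEa := (exp_neg_sq_div_le hlam₂ hr hrT).trans (hE a (Set.left_mem_Icc.mpr hab))
  have hEb := (exp_neg_sq_div_le hlam₂ hr hrT).trans (hE b (Set.right_mem_Icc.mpr hab))
  have hE0 : 0 ≤ E := (Real.exp_pos _).le.trans hEa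
  have hw : 0 ≤ (b - a) / Real.sqrt r := div_nonneg (sub_nonneg.mpr hab) hs.le
  rcases le_total ((b - a) / Real.sqrt r) 1 with h1 | h1
  · refine (abs_exp_sub_exp_le hlam₁ hlam₂ hr hrT hab hE).trans ?_
    gcongr
    exact Real.self_le_rpow_of_le_one hw h1 hβ₂.le
  · have hK : 1 ≤ 1 + 1 / (1 / 4 - lam) := by
      have : 0 ≤ 1 / (1 / 4 - lam) := by positivity
      linarith
    have hwβ : 1 ≤ ((b - a) / Real.sqrt r) ^ β := Real.one_le_rpow h1 hβ₁.le
    have h2 : 1 ≤ (1 + 1 / (1 / 4 - lam)) * ((b - a) / Real.sqrt r) ^ β :=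
      one_le_mul_of_one_le_of_one_le hK hwβ
    calc _ ≤ E := abs_sub_le_iff.mpr ⟨by linarith [Real.exp_pos (-(b ^ 2) / (4 * r))],
            by linarith [Real.exp_pos (-(a ^ 2) / (4 * r))]⟩
      _ ≤ _ := le_mul_of_one_le_left hE0 h2

/-! ### Weight and time singularity -/

lemma heat_prefactor_le {r : ℝ} (hr : 0 < r) :
    1 / (2 * Real.sqrt (Real.pi * r)) ≤ r ^ (-(1 / 2) : ℝ) := by
  rw [Real.rpow_neg hr.le, ← Real.sqrt_eq_rpow, ← one_div]
  have hs : 0 < Real.sqrt r := Real.sqrt_pos.mpr hr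
  apply one_div_le_one_div_of_le hs
  have : Real.sqrt r ≤ Real.sqrt (Real.pi * r) :=
    Real.sqrt_le_sqrt (by nlinarith [Real.pi_gt_three])
  linarith

/-- For `x - z` in the unit cell `[j, j+1]`, Gaussian decay in `z` is controlled by the weight
that depends only on `x` and `j`. -/
lemma exp_decay_le_weight {T lam x j z : ℝ} (hT : 0 < T) (hlam : 0 < lam)
    (hz : x - z ∈ Set.Icc j (j + 1)) :
    Real.exp (-(lam * z ^ 2 / T)) ≤ Real.exp (lam * (1 - (|x - j| - 1) ^ 2) / T) := by
  apply Real.exp_le_exp.mpr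
  rw [← neg_div, ← mul_neg]
  gcongr
  obtain ⟨h1, h2⟩ := hz
  rcases le_total 1 |x - j| with h | h
  · have h3 : |x - j| - 1 ≤ |z| := by
      have : |x - j| ≤ |z| + |x - z - j| := by
        calc |x - j| = |z + (x - z - j)| := by ring_nf
          _ ≤ _ := abs_add_le _ _
      have : |x - z - j| ≤ 1 := abs_le.mpr ⟨by linarith, by linarith⟩
      linarith
    have h4 : (|x - j| - 1) ^ 2 ≤ z ^ 2 := by
      rw [← sq_abs z]; exact pow_le_pow_left₀ (by linarith) h3 2
    linarith
  · nlinarith [abs_nonneg (x - j), sq_nonneg z]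

/-- The time integrand of the increment bound, in the elapsed time `r = t - s`. -/
noncomputable def incrBound (L C K β r : ℝ) : ℝ :=
  L * r ^ (-(1 / 2) : ℝ) + C * K * r ^ (-(1 + β) / 2 : ℝ)

lemma integrableOn_rpow_Ioo {e : ℝ} (he : -1 < e) (t : ℝ) :
    IntegrableOn (fun r : ℝ => r ^ e) (Set.Ioo 0 t) := by
  rcases le_total 0 t with ht | ht
  · exact ((intervalIntegrable_iff_integrableOn_Ioc_of_le ht).mp
      (intervalIntegral.intervalIntegrable_rpow' he)).mono_set Set.Ioo_subset_Ioc_self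
  · rw [Set.Ioo_eq_empty (not_lt.mpr ht)]; exact integrableOn_empty

lemma integrableOn_incrBound (L C K : ℝ) {β : ℝ} (hβ : β < 1) (t : ℝ) :
    IntegrableOn (incrBound L C K β) (Set.Ioo 0 t) := by
  unfold incrBound
  exact ((integrableOn_rpow_Ioo (by norm_num) t).const_mul L).add
    ((integrableOn_rpow_Ioo (by linarith) t).const_mul (C * K))

lemma measurePreserving_reflect (t : ℝ) :
    MeasurePreserving (fun s : ℝ => t - s) (volume.restrict (Set.Ioo 0 t))
      (volume.restrict (Set.Ioo 0 t)) := by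
  have h := (Measure.measurePreserving_sub_left (volume : Measure ℝ) t).restrict_preimage
    (measurableSet_Ioo (a := (0 : ℝ)) (b := t))
  simpa using h

lemma integrableOn_reflect {f : ℝ → ℝ} {t : ℝ} (hf : IntegrableOn f (Set.Ioo 0 t)) :
    IntegrableOn (fun s => f (t - s)) (Set.Ioo 0 t) :=
  (measurePreserving_reflect t).integrable_comp_of_integrable hf

lemma integral_reflect (f : ℝ → ℝ) (t : ℝ) :
    ∫ s in Set.Ioo 0 t, f (t - s) = ∫ r in Set.Ioo 0 t, f r :=
  (measurePreserving_reflect t).integral_comp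
    (MeasurableEquiv.subLeft t).measurableEmbedding f

/-! ### The increment of `q` -/

lemma integrable_qFun {σ : ℝ → ℝ → ℝ} {T C t : ℝ} (htT : t ≤ T)
    (hσ_meas : Measurable (Function.uncurry σ))
    (hσ_bdd : ∀ s ∈ Set.Icc (0 : ℝ) T, ∀ y : ℝ, |σ s y| ≤ C) (x y : ℝ) :
    IntegrableOn (fun s => heatKernel (t - s) (x - y) * σ s y) (Set.Ioo 0 t) := by
  have hdom : IntegrableOn (fun s : ℝ => (t - s) ^ (-(1 / 2) : ℝ) * C) (Set.Ioo 0 t) :=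
    (integrableOn_reflect (integrableOn_rpow_Ioo (by norm_num) t)).mul_const C
  refine Integrable.mono' hdom ?_ ?_
  · have h1 : Measurable fun s : ℝ => σ s y :=
      hσ_meas.comp (measurable_id.prodMk measurable_const)
    have h2 : Measurable fun s : ℝ => heatKernel (t - s) (x - y) := by
      unfold heatKernel; fun_prop
    exact (h2.mul h1).aestronglyMeasurable
  · filter_upwards [ae_restrict_mem measurableSet_Ioo] with s hs
    have hr : 0 < t - s := sub_pos.mpr hs.2
    have hb := hσ_bdd s ⟨hs.1.le, hs.2.le.trans htT⟩ y
    rw [norm_mul, Real.norm_eq_abs, Real.norm_eq_abs]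
    gcongr
    unfold heatKernel
    rw [abs_of_nonneg (by positivity)]
    refine (mul_le_of_le_one_right (by positivity) ?_).trans (heat_prefactor_le hr)
    exact Real.exp_le_one_iff.mpr
      (div_nonpos_of_nonpos_of_nonneg (by nlinarith [sq_nonneg (x - y)]) (by positivity))

/-- Under Assumption A4 on `σ` (measurable, bounded by `C_σ`, Hölder in space with
constant `L_σ` and exponent `β(σ) ∈ (1/2,1)`), for every `λ̃ ∈ (0,1/4)` there is a
constant `C > 0` such that for all `t ∈ [0,T]`, `x ∈ ℝ`, `j ∈ ℤ`, `h ∈ [0,1]` and all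
`y` with `y, y+h ∈ [j, j+1]`:
`|q(t,x,y+h) - q(t,x,y)| ≤ C h^{β(σ)} exp(λ̃ (1 - (|x-j| - 1)²)/T)`. -/
theorem qFun_increment_bound (T Cσ Lσ β lam : ℝ) (σ : ℝ → ℝ → ℝ) (hT : 0 < T)
    (hβ₁ : 1 / 2 < β) (hβ₂ : β < 1)
    (hσ_meas : Measurable (Function.uncurry σ))
    (hσ_bdd : ∀ s ∈ Set.Icc (0 : ℝ) T, ∀ y : ℝ, |σ s y| ≤ Cσ)
    (hσ_hold : ∀ s ∈ Set.Icc (0 : ℝ) T, ∀ y₁ y₂ : ℝ, |σ s y₁ - σ s y₂| ≤ Lσ * |y₁ - y₂| ^ β)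
    (hlam₁ : 0 < lam) (hlam₂ : lam < 1 / 4) :
    ∃ C : ℝ, 0 < C ∧
      ∀ t ∈ Set.Icc (0 : ℝ) T, ∀ x : ℝ, ∀ j : ℤ, ∀ h ∈ Set.Icc (0 : ℝ) 1, ∀ y : ℝ,
        y ∈ Set.Icc (j : ℝ) (j + 1) → y + h ∈ Set.Icc (j : ℝ) (j + 1) →
          |qFun σ t x (y + h) - qFun σ t x y| ≤
            C * h ^ β * Real.exp (lam * (1 - (|x - j| - 1) ^ 2) / T) := by
  have hL : 0 ≤ Lσ := by
    have h := hσ_hold 0 ⟨le_rfl, hT.le⟩ 1 0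
    simp only [sub_zero, abs_one, Real.one_rpow, mul_one] at h
    exact (abs_nonneg _).trans h
  have hC : 0 ≤ Cσ := (abs_nonneg _).trans (hσ_bdd 0 ⟨le_rfl, hT.le⟩ 0)
  set K := 1 + 1 / (1 / 4 - lam) with hK
  have hδ : 0 < 1 / 4 - lam := by linarith
  have hKpos : 0 < K := by positivity
  have hG0 : ∀ r : ℝ, 0 < r → 0 ≤ incrBound Lσ Cσ K β r := by
    intro r hr; unfold incrBound; positivity
  have hI0 : 0 ≤ ∫ r in Set.Ioo 0 T, incrBound Lσ Cσ K β r :=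
    setIntegral_nonneg measurableSet_Ioo fun r hr => hG0 r hr.1
  refine ⟨(∫ r in Set.Ioo 0 T, incrBound Lσ Cσ K β r) + 1, by linarith, ?_⟩
  rintro t ⟨ht0, htT⟩ x j h ⟨hh0, hh1⟩ y hy hyh
  set E := Real.exp (lam * (1 - (|x - j| - 1) ^ 2) / T) with hE
  have hE0 : 0 < E := Real.exp_pos _
  have hw : ∀ ξ ∈ Set.Icc (x - (y + h)) (x - y), Real.exp (-(lam * ξ ^ 2 / T)) ≤ E := by
    intro ξ hξ
    exact exp_decay_le_weight hT hlam₁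
      ⟨by linarith [hy.1, hξ.2], by linarith [hyh.2, hξ.1]⟩
  have hab : x - (y + h) ≤ x - y := by linarith
  have hpt : ∀ s ∈ Set.Ioo 0 t,
      ‖heatKernel (t - s) (x - (y + h)) * σ s (y + h) - heatKernel (t - s) (x - y) * σ s y‖ ≤
        incrBound Lσ Cσ K β (t - s) * (h ^ β * E) := by
    intro s hs
    have hr : 0 < t - s := sub_pos.mpr hs.2
    have hrT : t - s ≤ T := by linarith [hs.1]
    have hsT : s ∈ Set.Icc 0 T := ⟨hs.1.le, hs.2.le.trans htT⟩
    have hpre := heat_prefactor_le hr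
    have hexp := abs_exp_sub_exp_le_rpow hlam₁ hlam₂ hr hrT hab (by linarith) hβ₂ hw
    have hgauss := (exp_neg_sq_div_le (u := x - (y + h)) hlam₂ hr hrT).trans
      (hw _ (Set.left_mem_Icc.mpr hab))
    have hhold := hσ_hold s hsT (y + h) y
    have hbdd := hσ_bdd s hsT y
    rw [add_sub_cancel_left, abs_of_nonneg hh0] at hhold
    rw [show x - y - (x - (y + h)) = h by ring, Real.div_rpow hh0 (Real.sqrt_nonneg _)] at hexp
    generalize t - s = r at hr hrT hpre hexp hgauss ⊢
    have hpow : r ^ (-(1 / 2) : ℝ) * (h ^ β / Real.sqrt r ^ β) =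
        r ^ (-(1 + β) / 2 : ℝ) * h ^ β := by
      rw [Real.sqrt_eq_rpow, ← Real.rpow_mul hr.le, div_eq_mul_inv (h ^ β), ← Real.rpow_neg hr.le,
        mul_comm (h ^ β), ← mul_assoc, ← Real.rpow_add hr]
      congr 2
      ring
    unfold heatKernel incrBound
    set P := 1 / (2 * Real.sqrt (Real.pi * r)) with hP
    have hP0 : 0 ≤ P := by positivity
    set A := Real.exp (-((x - (y + h)) ^ 2) / (4 * r)) with hA
    set B := Real.exp (-((x - y) ^ 2) / (4 * r)) with hB
    have hA0 : 0 ≤ A := (Real.exp_pos _).le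
    -- Freezing `σ` at `y` separates its Hölder increment from the increment of the kernel.
    have hdec : P * A * σ s (y + h) - P * B * σ s y =
        P * A * (σ s (y + h) - σ s y) + P * (A - B) * σ s y := by ring
    rw [hdec, Real.norm_eq_abs]
    calc |P * A * (σ s (y + h) - σ s y) + P * (A - B) * σ s y|
        ≤ P * A * |σ s (y + h) - σ s y| + P * |A - B| * |σ s y| := by
          refine (abs_add_le _ _).trans (le_of_eq ?_)
          rw [abs_mul, abs_mul, abs_mul, abs_mul, abs_of_nonneg hP0, abs_of_nonneg hA0]
      _ ≤ r ^ (-(1 / 2) : ℝ) * E * (Lσ * h ^ β) +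
            r ^ (-(1 / 2) : ℝ) * (K * (h ^ β / Real.sqrt r ^ β) * E) * Cσ := by
          gcongr
      _ = Lσ * r ^ (-(1 / 2) : ℝ) * (h ^ β * E) +
            Cσ * K * (r ^ (-(1 / 2) : ℝ) * (h ^ β / Real.sqrt r ^ β)) * E := by ring
      _ = _ := by rw [hpow]; ring
  have hGt : IntegrableOn (fun s => incrBound Lσ Cσ K β (t - s) * (h ^ β * E)) (Set.Ioo 0 t) :=
    (integrableOn_reflect (integrableOn_incrBound Lσ Cσ K hβ₂ t)).mul_const _
  have hmono : ∫ r in Set.Ioo 0 t, incrBound Lσ Cσ K β r ≤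
      ∫ r in Set.Ioo 0 T, incrBound Lσ Cσ K β r := by
    refine setIntegral_mono_set (integrableOn_incrBound Lσ Cσ K hβ₂ T) ?_
      (Set.Ioo_subset_Ioo_right htT).eventuallyLE
    filter_upwards [ae_restrict_mem measurableSet_Ioo] with r hr
    exact hG0 r hr.1
  have hhβ : 0 ≤ h ^ β := Real.rpow_nonneg hh0 β
  unfold qFun
  rw [← integral_sub (integrable_qFun htT hσ_meas hσ_bdd x (y + h))
    (integrable_qFun htT hσ_meas hσ_bdd x y), ← Real.norm_eq_abs]
  calc _ ≤ ∫ s in Set.Ioo 0 t, incrBound Lσ Cσ K β (t - s) * (h ^ β * E) := by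
        refine norm_integral_le_of_norm_le hGt ?_
        filter_upwards [ae_restrict_mem measurableSet_Ioo] with s hs
        exact hpt s hs
    _ = (∫ r in Set.Ioo 0 t, incrBound Lσ Cσ K β r) * (h ^ β * E) := by
        rw [integral_mul_const, integral_reflect]
    _ ≤ ((∫ r in Set.Ioo 0 T, incrBound Lσ Cσ K β r) + 1) * (h ^ β * E) := by
        gcongr
        linarith
    _ = _ := by ring
end
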